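/- I(A_{Z|Y};Y) = I(X;B_{Z|X}), where (A_{Z|Y},Y) is the pair on 𝒳×𝒴 with joint distribution r(x,y) = p_Y(y)·Pr(A_y = x) (interpreted as 0 when p_Y(y) = 0) and (X,B_{Z|X}) is the pair on 𝒳×𝒴 with joint distribution s(x,y) = p_X(x)·Pr(B^x = y) (interpreted as 0 when p_X(x) = 0). -/

import Mathlib

open Finset

/-- Shannon entropy of a distribution on a finite type (natural-log base). -/
noncomputable def ent {α : Type*} [Fintype α] (p : α → ℝ) : ℝ :=
  ∑ a, Real.negMulLog (p a)

/-- Mutual information between the two coordinates of a joint distribution. -/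
noncomputable def mutInfo {α β : Type*} [Fintype α] [Fintype β] (q : α × β → ℝ) : ℝ :=
  ent (fun a => ∑ b, q (a, b)) + ent (fun b => ∑ a, q (a, b)) - ent q

/-- Conditional entropy of the first coordinate given the second: H(A|B) = H(A,B) - H(B). -/
noncomputable def condEntFst {α β : Type*} [Fintype α] [Fintype β] (q : α × β → ℝ) : ℝ :=
  ent q - ent (fun b => ∑ a, q (a, b))

/-- Conditional entropy of the second coordinate given the first: H(B|A) = H(A,B) - H(A). -/
noncomputable def condEntSnd {α β : Type*} [Fintype α] [Fintype β] (q : α × β → ℝ) : ℝ :=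
  ent q - ent (fun a => ∑ b, q (a, b))

section PID

variable {X Y Z : Type*} [Fintype X] [Fintype Y] [Fintype Z]

/-- 𝒳-marginal of a joint distribution on 𝒳×𝒴×𝒵. -/
noncomputable def pX (p : X × Y × Z → ℝ) (x : X) : ℝ := ∑ y, ∑ z, p (x, y, z)

/-- 𝒴-marginal. -/
noncomputable def pY (p : X × Y × Z → ℝ) (y : Y) : ℝ := ∑ x, ∑ z, p (x, y, z)

/-- 𝒵-marginal. -/
noncomputable def pZ (p : X × Y × Z → ℝ) (z : Z) : ℝ := ∑ x, ∑ y, p (x, y, z)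

/-- The do-operation: q(x,y,z) = p(x,y,z)·c(z)/p_Z(z) if p_Z(z) > 0, else 0. -/
noncomputable def doOp (p : X × Y × Z → ℝ) (c : Z → ℝ) : X × Y × Z → ℝ :=
  fun t => if 0 < pZ p t.2.2 then p t * c t.2.2 / pZ p t.2.2 else 0

/-- (𝒳,𝒵)-marginal. -/
noncomputable def margXZ (p : X × Y × Z → ℝ) : X × Z → ℝ := fun t => ∑ y, p (t.1, y, t.2)

/-- (𝒴,𝒵)-marginal. -/
noncomputable def margYZ (p : X × Y × Z → ℝ) : Y × Z → ℝ := fun t => ∑ x, p (x, t.1, t.2)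

/-- (𝒳,𝒴)-marginal. -/
noncomputable def margXY (p : X × Y × Z → ℝ) : X × Y → ℝ := fun t => ∑ z, p (t.1, t.2, z)

/-- c_y(z) = Pr(Z = z | Y = y). -/
noncomputable def cy (p : X × Y × Z → ℝ) (y : Y) : Z → ℝ :=
  fun z => (∑ x, p (x, y, z)) / pY p y

/-- The distribution of (A_y, B_y, C_y) = do(p | c_y). -/
noncomputable def doy (p : X × Y × Z → ℝ) (y : Y) : X × Y × Z → ℝ := doOp p (cy p y)

/-- c^x(z) = Pr(Z = z | X = x). -/
noncomputable def cx (p : X × Y × Z → ℝ) (x : X) : Z → ℝ :=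
  fun z => (∑ y, p (x, y, z)) / pX p x

/-- The distribution of (A^x, B^x, C^x) = do(p | c^x). -/
noncomputable def dox (p : X × Y × Z → ℝ) (x : X) : X × Y × Z → ℝ := doOp p (cx p x)

/-- Unique information Un(X→Z|Y) = Σ_{y : p_Y(y)>0} p_Y(y)·I(A_y;C_y). -/
noncomputable def Un (p : X × Y × Z → ℝ) : ℝ :=
  ∑ y ∈ Finset.univ.filter (fun y => 0 < pY p y), pY p y * mutInfo (margXZ (doy p y))

/-- Unique information Un(Y→Z|X) = Σ_{x : p_X(x)>0} p_X(x)·I(B^x;C^x). -/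
noncomputable def UnYX (p : X × Y × Z → ℝ) : ℝ :=
  ∑ x ∈ Finset.univ.filter (fun x => 0 < pX p x), pX p x * mutInfo (margYZ (dox p x))

/-- Redundant information Red(X,Y→Z) = I(X;Z) − Un(X→Z|Y). -/
noncomputable def Red (p : X × Y × Z → ℝ) : ℝ := mutInfo (margXZ p) - Un p

/-- Conditional mutual information I(X;Z|Y) = H(X,Y) + H(Y,Z) − H(Y) − H(X,Y,Z). -/
noncomputable def condMI (p : X × Y × Z → ℝ) : ℝ :=
  ent (margXY p) + ent (margYZ p) - ent (pY p) - ent p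

/-- Synergistic information Syn(X,Y→Z) = I(X;Z|Y) − Un(X→Z|Y). -/
noncomputable def Syn (p : X × Y × Z → ℝ) : ℝ := condMI p - Un p

end PID

/-!
Both joint distributions are the law of the Markov chain `X — Z — Y` in which `X` and `Y` are drawn
independently given `Z`. Indeed `p_Y(y) c_y(z) = p(y, z)`, while the do-operation keeps the
conditional law of `X` given `Z`, so `r(x, y) = ∑ z, p(x, z) p(y, z) / p_Z(z)`. This is symmetric in
the roles of `X` and `Y`, hence also equals `s(x, y)`.
-/

theorem ite_pos_mul_eq_of_nonneg {R : Type*} [MulZeroClass R] [PartialOrder R] {a : R}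
    [Decidable (0 < a)] (ha : 0 ≤ a) (b : R) : (if 0 < a then a * b else 0) = a * b := by
  rcases ha.eq_or_lt with rfl | hpos
  · simp
  · exact if_pos hpos

theorem sum_mul_div_sum_cancel {ι K : Type*} [Semifield K] [PartialOrder K] [IsOrderedAddMonoid K]
    {s : Finset ι} {f : ι → K} (hf : ∀ i ∈ s, 0 ≤ f i) {i : ι} (hi : i ∈ s) :
    (∑ j ∈ s, f j) * (f i / ∑ j ∈ s, f j) = f i :=
  mul_div_cancel_of_imp' fun hsum ↦ (sum_eq_zero_iff_of_nonneg hf).mp hsum i hi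

section Marginals

variable {X Y Z : Type*}

theorem margXZ_nonneg [Fintype Y] {p : X × Y × Z → ℝ} (hp : ∀ t, 0 ≤ p t) (t : X × Z) :
    0 ≤ margXZ p t :=
  sum_nonneg fun _ _ ↦ hp _

theorem margYZ_nonneg [Fintype X] {p : X × Y × Z → ℝ} (hp : ∀ t, 0 ≤ p t) (t : Y × Z) :
    0 ≤ margYZ p t :=
  sum_nonneg fun _ _ ↦ hp _

theorem pX_eq_sum_margXZ [Fintype Y] [Fintype Z] (p : X × Y × Z → ℝ) (x : X) :
    pX p x = ∑ z, margXZ p (x, z) :=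
  sum_comm

theorem pY_eq_sum_margYZ [Fintype X] [Fintype Z] (p : X × Y × Z → ℝ) (y : Y) :
    pY p y = ∑ z, margYZ p (y, z) :=
  sum_comm

theorem pX_nonneg [Fintype Y] [Fintype Z] {p : X × Y × Z → ℝ} (hp : ∀ t, 0 ≤ p t) (x : X) :
    0 ≤ pX p x :=
  sum_nonneg fun _ _ ↦ sum_nonneg fun _ _ ↦ hp _

theorem pY_nonneg [Fintype X] [Fintype Z] {p : X × Y × Z → ℝ} (hp : ∀ t, 0 ≤ p t) (y : Y) :
    0 ≤ pY p y :=
  sum_nonneg fun _ _ ↦ sum_nonneg fun _ _ ↦ hp _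

theorem pZ_nonneg [Fintype X] [Fintype Y] {p : X × Y × Z → ℝ} (hp : ∀ t, 0 ≤ p t) (z : Z) :
    0 ≤ pZ p z :=
  sum_nonneg fun _ _ ↦ sum_nonneg fun _ _ ↦ hp _

theorem pX_mul_cx [Fintype Y] [Fintype Z] {p : X × Y × Z → ℝ} (hp : ∀ t, 0 ≤ p t)
    (x : X) (z : Z) : pX p x * cx p x z = margXZ p (x, z) := by
  rw [cx, pX_eq_sum_margXZ]
  exact sum_mul_div_sum_cancel (fun z' _ ↦ margXZ_nonneg hp (x, z')) (mem_univ z)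

theorem pY_mul_cy [Fintype X] [Fintype Z] {p : X × Y × Z → ℝ} (hp : ∀ t, 0 ≤ p t)
    (y : Y) (z : Z) : pY p y * cy p y z = margYZ p (y, z) := by
  rw [cy, pY_eq_sum_margYZ]
  exact sum_mul_div_sum_cancel (fun z' _ ↦ margYZ_nonneg hp (y, z')) (mem_univ z)

end Marginals

section DoOperation

variable {X Y Z : Type*} [Fintype X] [Fintype Y] {p : X × Y × Z → ℝ}

theorem doOp_apply_of_nonneg (hp : ∀ t, 0 ≤ p t) (c : Z → ℝ) (x : X) (y : Y) (z : Z) :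
    doOp p c (x, y, z) = p (x, y, z) * c z / pZ p z := by
  rcases (pZ_nonneg hp z).eq_or_lt with hz | hz
  · simp [doOp, ← hz]
  · exact if_pos hz

theorem margXZ_doOp (hp : ∀ t, 0 ≤ p t) (c : Z → ℝ) (x : X) (z : Z) :
    margXZ (doOp p c) (x, z) = margXZ p (x, z) * c z / pZ p z := by
  simp only [margXZ, doOp_apply_of_nonneg hp, sum_mul, sum_div]

theorem margYZ_doOp (hp : ∀ t, 0 ≤ p t) (c : Z → ℝ) (y : Y) (z : Z) :
    margYZ (doOp p c) (y, z) = margYZ p (y, z) * c z / pZ p z := by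
  simp only [margYZ, doOp_apply_of_nonneg hp, sum_mul, sum_div]

end DoOperation

section MarkovJoint

variable {X Y Z : Type*} [Fintype X] [Fintype Y] [Fintype Z]

/-- The joint law of `X` and `Y` drawn independently given `Z`, with the `(X, Z)`- and
`(Y, Z)`-marginals of `p`. It is the common value of the two distributions compared in `stmt11`.
Values `z` with `p_Z(z) = 0` contribute `0` because division by zero is zero. -/
noncomputable def markovJoint (p : X × Y × Z → ℝ) (t : X × Y) : ℝ :=
  ∑ z, margXZ p (t.1, z) * margYZ p (t.2, z) / pZ p z

variable {p : X × Y × Z → ℝ}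

theorem pY_mul_pX_doy (hp : ∀ t, 0 ≤ p t) (x : X) (y : Y) :
    pY p y * pX (doy p y) x = markovJoint p (x, y) := by
  calc pY p y * pX (doy p y) x
      = ∑ z, pY p y * (margXZ p (x, z) * cy p y z / pZ p z) := by
        simp only [doy, pX_eq_sum_margXZ, margXZ_doOp hp, mul_sum]
    _ = ∑ z, margXZ p (x, z) * (pY p y * cy p y z) / pZ p z :=
        sum_congr rfl fun z _ ↦ by ring
    _ = markovJoint p (x, y) := by simp only [pY_mul_cy hp, markovJoint]

theorem pX_mul_pY_dox (hp : ∀ t, 0 ≤ p t) (x : X) (y : Y) :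
    pX p x * pY (dox p x) y = markovJoint p (x, y) := by
  calc pX p x * pY (dox p x) y
      = ∑ z, pX p x * (margYZ p (y, z) * cx p x z / pZ p z) := by
        simp only [dox, pY_eq_sum_margYZ, margYZ_doOp hp, mul_sum]
    _ = ∑ z, pX p x * cx p x z * margYZ p (y, z) / pZ p z :=
        sum_congr rfl fun z _ ↦ by ring
    _ = markovJoint p (x, y) := by simp only [pX_mul_cx hp, markovJoint]

end MarkovJoint

theorem stmt11_general {X Y Z : Type*} [Fintype X] [Fintype Y] [Fintype Z]
    (p : X × Y × Z → ℝ) (hp0 : ∀ t, 0 ≤ p t) :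
    (fun t : X × Y => if 0 < pY p t.2 then pY p t.2 * pX (doy p t.2) t.1 else 0) =
      fun t : X × Y => if 0 < pX p t.1 then pX p t.1 * pY (dox p t.1) t.2 else 0 := by
  funext ⟨x, y⟩
  rw [ite_pos_mul_eq_of_nonneg (pY_nonneg hp0 y), ite_pos_mul_eq_of_nonneg (pX_nonneg hp0 x),
    pY_mul_pX_doy hp0, pX_mul_pY_dox hp0]

theorem stmt11 {X Y Z : Type*} [Fintype X] [Fintype Y] [Fintype Z]
    [Nonempty X] [Nonempty Y] [Nonempty Z]
    (p : X × Y × Z → ℝ) (hp0 : ∀ t, 0 ≤ p t) (hp1 : ∑ t, p t = 1) :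
    mutInfo (fun t : X × Y =>
        if 0 < pY p t.2 then pY p t.2 * pX (doy p t.2) t.1 else 0) =
    mutInfo (fun t : X × Y =>
        if 0 < pX p t.1 then pX p t.1 * pY (dox p t.1) t.2 else 0) :=
  congrArg mutInfo (stmt11_general p hp0)
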